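/- For every τ in the complex upper half-plane, (1 + c(τ/2))·c(−1/τ) = 1/2 − c(τ/2); equivalently c(−1/τ) = (1/2 − c(τ/2))/(1 + c(τ/2)). -/

import Mathlib

open Complex

/-- The nome `q = exp(2πiτ)`. -/
noncomputable def nome (τ : ℂ) : ℂ := Complex.exp (2 * Real.pi * I * τ)

/-- Ramanujan's cubic continued fraction, as an infinite product:
`c(τ) = q^{1/3} ∏_{n≥1} (1-q^{6n-1})(1-q^{6n-5})/(1-q^{6n-3})²`. -/
noncomputable def c (τ : ℂ) : ℂ :=
  Complex.exp (2 * Real.pi * I * τ / 3) *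
    ∏' n : ℕ,
      ((1 - nome τ ^ (6 * (n + 1) - 1)) * (1 - nome τ ^ (6 * (n + 1) - 5)) /
        (1 - nome τ ^ (6 * (n + 1) - 3)) ^ 2)

open Filter Topology

lemma multipliable_one_add_mul_pow {x : ℂ} (hx : ‖x‖ < 1) (a : ℂ) (m l : ℕ) :
    Multipliable fun k : ℕ ↦ 1 + a * x ^ ((m + 1) * k + l) := by
  refine multipliable_one_add_of_summable (f := fun k ↦ a * x ^ ((m + 1) * k + l)) ?_
  have h : ‖x ^ (m + 1)‖ < 1 := by
    rw [norm_pow]; exact pow_lt_one₀ (norm_nonneg _) hx (by simp)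
  have := (summable_geometric_of_lt_one (norm_nonneg _) h).mul_left ‖a * x ^ l‖
  refine this.congr fun k ↦ ?_
  rw [← norm_pow, ← norm_mul]
  congr 1
  ring

lemma one_sub_pow_succ_ne_zero {x : ℂ} (hx : ‖x‖ < 1) (n : ℕ) : 1 - x ^ (n + 1) ≠ 0 := by
  intro h
  have h1 : ‖x ^ (n + 1)‖ < 1 := by
    rw [norm_pow]; exact pow_lt_one₀ (norm_nonneg _) hx (by simp)
  rw [← sub_eq_zero.mp h] at h1
  simp at h1

/-- Euler's function `∏ (1 - xⁿ)`. -/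
noncomputable def eulerProd (x : ℂ) : ℂ := ∏' n : ℕ, (1 - x ^ (n + 1))

lemma eulerProd_ne_zero {x : ℂ} (hx : ‖x‖ < 1) : eulerProd x ≠ 0 := by
  refine tprod_one_add_ne_zero_of_summable (f := fun n : ℕ ↦ -x ^ (n + 1)) ?_ ?_
  · exact fun i ↦ by simpa [sub_eq_add_neg] using one_sub_pow_succ_ne_zero hx i
  · simpa using (summable_nat_add_iff 1).mpr (summable_geometric_of_lt_one (norm_nonneg _) hx)

/-- The reciprocal of `∏_{k ≤ n} (1 - yᵏ)`, extended by zero to negative `n`. -/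
noncomputable def invQFactorial (y : ℂ) (n : ℤ) : ℂ :=
  if 0 ≤ n then (∏ k ∈ Finset.range n.toNat, (1 - y ^ (k + 1)))⁻¹ else 0

lemma invQFactorial_sub_one {y : ℂ} (hy : ‖y‖ < 1) (n : ℤ) :
    invQFactorial y (n - 1) = invQFactorial y n * (1 - y ^ n) := by
  rcases lt_trichotomy n 0 with h | rfl | h
  · rw [invQFactorial, if_neg (by omega), invQFactorial, if_neg (by omega), zero_mul]
  · simp [invQFactorial]
  · obtain ⟨m, rfl⟩ : ∃ m : ℕ, n = m + 1 := ⟨(n - 1).toNat, by omega⟩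
    have h1 : (0 : ℤ) ≤ m + 1 := by omega
    have h2 : ((m : ℤ) + 1).toNat = m + 1 := by omega
    have h3 := one_sub_pow_succ_ne_zero hy m
    have h4 : (y : ℂ) ^ ((m : ℤ) + 1) = y ^ (m + 1) := by exact_mod_cast zpow_natCast y (m + 1)
    simp only [invQFactorial, h1, h2, if_true, h4, Finset.prod_range_succ]
    simp only [add_sub_cancel_right, Int.natCast_nonneg, if_true, Int.toNat_natCast]
    rw [mul_inv, mul_assoc, inv_mul_cancel₀ h3, mul_one]

/-- A finite form of the Jacobi triple product. -/
lemma hasSum_finite_tripleProduct {x z : ℂ} (hx : ‖x‖ < 1) (hx0 : x ≠ 0) (hz : z ≠ 0) (N : ℕ) :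
    HasSum (fun j : ℤ ↦ (∏ k ∈ Finset.range (2 * N), (1 - (x ^ 2) ^ (k + 1))) *
      (invQFactorial (x ^ 2) (N + j) * invQFactorial (x ^ 2) (N - j)) * (x ^ (j ^ 2) * z ^ j))
      (∏ k ∈ Finset.range N, (1 + z * x ^ (2 * k + 1)) * (1 + z⁻¹ * x ^ (2 * k + 1))) := by
  have hy : ‖x ^ 2‖ < 1 := by
    rw [norm_pow]; exact pow_lt_one₀ (norm_nonneg _) hx (by simp)
  induction N with
  | zero =>
    have h := hasSum_single (f := fun j : ℤ ↦
      (∏ k ∈ Finset.range (2 * 0), (1 - (x ^ 2) ^ (k + 1))) *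
        (invQFactorial (x ^ 2) ((0 : ℕ) + j) * invQFactorial (x ^ 2) ((0 : ℕ) - j)) *
          (x ^ (j ^ 2) * z ^ j)) 0 fun j hj ↦ ?_
    · simpa [invQFactorial] using h
    · rcases lt_or_gt_of_ne hj with h | h
      · simp [invQFactorial, h.not_ge]
      · simp [invQFactorial, h.not_ge]
  | succ N ih =>
    rw [Finset.prod_range_succ]
    have hp := ((Equiv.subRight (1 : ℤ)).hasSum_iff.mpr ih).mul_left (z * x ^ (2 * N + 1))
    have hm := ((Equiv.addRight (1 : ℤ)).hasSum_iff.mpr ih).mul_left (z⁻¹ * x ^ (2 * N + 1))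
    have h0 := ih.mul_left (1 + x ^ (4 * N + 2))
    convert! h0.add (hp.add hm) using 1
    · ext j
      simp only [Function.comp_def, Equiv.subRight_apply, Equiv.coe_addRight]
      set R := invQFactorial (x ^ 2) (N + 1 + j) with hR
      set S := invQFactorial (x ^ 2) (N + 1 - j) with hS
      have e1 : invQFactorial (x ^ 2) (N + j) = R * (1 - (x ^ 2) ^ ((N : ℤ) + 1 + j)) := by
        rw [← invQFactorial_sub_one hy]; congr 1; ring
      have e2 : invQFactorial (x ^ 2) (N - j) = S * (1 - (x ^ 2) ^ ((N : ℤ) + 1 - j)) := by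
        rw [← invQFactorial_sub_one hy]; congr 1; ring
      have e3 : invQFactorial (x ^ 2) (N + (j - 1)) =
          R * (1 - (x ^ 2) ^ ((N : ℤ) + 1 + j)) * (1 - (x ^ 2) ^ ((N : ℤ) + j)) := by
        rw [← e1, ← invQFactorial_sub_one hy]; congr 1; ring
      have e4 : invQFactorial (x ^ 2) (N - (j + 1)) =
          S * (1 - (x ^ 2) ^ ((N : ℤ) + 1 - j)) * (1 - (x ^ 2) ^ ((N : ℤ) - j)) := by
        rw [← e2, ← invQFactorial_sub_one hy]; congr 1; ring
      have e5 : invQFactorial (x ^ 2) (N - (j - 1)) = S := by rw [hS]; congr 1; ring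
      have e6 : invQFactorial (x ^ 2) (N + (j + 1)) = R := by rw [hR]; congr 1; ring
      have e7 : invQFactorial (x ^ 2) ((N + 1 : ℕ) + j) = R := by rw [hR]; congr 1
      have e8 : invQFactorial (x ^ 2) ((N + 1 : ℕ) - j) = S := by rw [hS]; congr 1
      rw [e1, e2, e3, e4, e5, e6, e7, e8, show 2 * (N + 1) = 2 * N + 1 + 1 by ring,
        Finset.prod_range_succ, Finset.prod_range_succ]
      set p := ∏ k ∈ Finset.range (2 * N), (1 - (x ^ 2) ^ (k + 1))
      have hxj : x ^ j ≠ 0 := zpow_ne_zero _ hx0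
      have z1 : x ^ ((j - 1) ^ 2) = x ^ (j ^ 2) * (x ^ j)⁻¹ ^ 2 * x := by
        rw [inv_pow, ← zpow_natCast, ← zpow_mul, ← zpow_neg, ← zpow_add₀ hx0, ← zpow_add_one₀ hx0]
        congr 1; push_cast; ring
      have z2 : x ^ ((j + 1) ^ 2) = x ^ (j ^ 2) * (x ^ j) ^ 2 * x := by
        rw [← zpow_natCast, ← zpow_mul, ← zpow_add₀ hx0, ← zpow_add_one₀ hx0]
        congr 1; push_cast; ring
      have z3 : z ^ (j - 1) = z ^ j * z⁻¹ := zpow_sub_one₀ hz j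
      have z4 : z ^ (j + 1) = z ^ j * z := zpow_add_one₀ hz j
      have hx2 : x ^ 2 ≠ 0 := pow_ne_zero _ hx0
      have u1 : (x ^ 2) ^ j = (x ^ j) ^ 2 := by
        rw [← zpow_natCast, ← zpow_natCast, ← zpow_mul, ← zpow_mul, mul_comm]
      rw [z1, z2, z3, z4]
      simp only [zpow_add₀ hx2, zpow_sub₀ hx2, zpow_natCast, zpow_one, u1]
      generalize x ^ j = w at *
      generalize x ^ (j ^ 2) = t at *
      generalize z ^ j = s at *
      field_simp
      ring
    · field_simp
      ring

lemma tendsto_prod_eulerProd {y : ℂ} (hy : ‖y‖ < 1) :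
    Tendsto (fun n ↦ ∏ k ∈ Finset.range n, (1 - y ^ (k + 1))) atTop (𝓝 (eulerProd y)) :=
  (ModularForm.multipliable_one_sub_pow hy).hasProd.tendsto_prod_nat

lemma tendsto_invQFactorial {y : ℂ} (hy : ‖y‖ < 1) :
    Tendsto (fun n : ℕ ↦ invQFactorial y n) atTop (𝓝 (eulerProd y)⁻¹) := by
  simpa [invQFactorial] using (tendsto_prod_eulerProd hy).inv₀ (eulerProd_ne_zero hy)

lemma exists_norm_le_of_tendsto {f : ℕ → ℂ} {a : ℂ} (h : Tendsto f atTop (𝓝 a)) :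
    ∃ C, ∀ n, ‖f n‖ ≤ C := by
  obtain ⟨C, hC⟩ := (Metric.isBounded_range_of_tendsto f h).exists_norm_le
  exact ⟨C, fun n ↦ hC _ ⟨n, rfl⟩⟩

lemma summable_zpow_sq_mul_zpow {x z : ℂ} (hx : ‖x‖ < 1) (hx0 : x ≠ 0) (hz : z ≠ 0) :
    Summable fun j : ℤ ↦ x ^ (j ^ 2) * z ^ j := by
  set τ : ℂ := log x / (Real.pi * I) with hτ
  have him : 0 < τ.im := by
    have : τ = -I * (log x / Real.pi) := by rw [hτ]; field_simp; simp
    rw [this]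
    simp only [neg_mul, neg_im, I_mul_im, div_ofReal_re, log_re]
    have : Real.log ‖x‖ < 0 := Real.log_neg (norm_pos_iff.mpr hx0) hx
    have := div_neg_of_neg_of_pos this Real.pi_pos
    linarith
  refine ((summable_jacobiTheta₂_term_iff (log z / (2 * Real.pi * I)) τ).mpr him).congr fun j ↦ ?_
  have e : 2 * Real.pi * I * j * (log z / (2 * Real.pi * I)) + Real.pi * I * j ^ 2 * τ =
      (j ^ 2 : ℤ) * log x + j * log z := by
    rw [hτ]
    push_cast
    field_simp
    ring
  rw [jacobiTheta₂_term, e, exp_add, exp_int_mul, exp_int_mul, exp_log hx0, exp_log hz]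

/-- The Jacobi triple product identity. -/
theorem hasSum_tripleProduct {x z : ℂ} (hx : ‖x‖ < 1) (hx0 : x ≠ 0) (hz : z ≠ 0) :
    HasSum (fun j : ℤ ↦ x ^ (j ^ 2) * z ^ j)
      (eulerProd (x ^ 2) * ((∏' k : ℕ, (1 + z * x ^ (2 * k + 1))) *
        ∏' k : ℕ, (1 + z⁻¹ * x ^ (2 * k + 1)))) := by
  have hy : ‖x ^ 2‖ < 1 := by
    rw [norm_pow]; exact pow_lt_one₀ (norm_nonneg _) hx (by simp)
  have hs := summable_zpow_sq_mul_zpow hx hx0 hz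
  obtain ⟨C, hC⟩ := exists_norm_le_of_tendsto (tendsto_prod_eulerProd hy)
  obtain ⟨D, hD⟩ := exists_norm_le_of_tendsto (tendsto_invQFactorial hy)
  have hD0 : 0 ≤ D := (norm_nonneg _).trans (hD 0)
  have hC0 : 0 ≤ C := (norm_nonneg _).trans (hC 0)
  have hD' (n : ℤ) : ‖invQFactorial (x ^ 2) n‖ ≤ D := by
    rcases le_or_gt 0 n with h | h
    · lift n to ℕ using h
      exact hD n
    · simpa [invQFactorial, h.not_ge] using hD0
  have hlim (j : ℤ) : Tendsto (fun N : ℕ ↦ invQFactorial (x ^ 2) (N + j)) atTop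
      (𝓝 (eulerProd (x ^ 2))⁻¹) := by
    have ht : Tendsto (fun N : ℕ ↦ ((N : ℤ) + j).toNat) atTop atTop :=
      tendsto_atTop_atTop.mpr fun b ↦ ⟨b + j.natAbs, fun a ha ↦ by omega⟩
    refine ((tendsto_invQFactorial hy).comp ht).congr' ?_
    filter_upwards [eventually_ge_atTop j.natAbs] with N hN
    simp only [Function.comp_apply]
    congr 1
    omega
  have key := tendsto_tsum_of_dominated_convergence (𝓕 := atTop)
    (f := fun (N : ℕ) (j : ℤ) ↦ (∏ k ∈ Finset.range (2 * N), (1 - (x ^ 2) ^ (k + 1))) *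
      (invQFactorial (x ^ 2) (N + j) * invQFactorial (x ^ 2) (N - j)) * (x ^ (j ^ 2) * z ^ j))
    (g := fun j : ℤ ↦ eulerProd (x ^ 2) * ((eulerProd (x ^ 2))⁻¹ * (eulerProd (x ^ 2))⁻¹) *
      (x ^ (j ^ 2) * z ^ j))
    (bound := fun j : ℤ ↦ C * (D * D) * ‖x ^ (j ^ 2) * z ^ j‖) (hs.norm.mul_left _) ?_ ?_
  · simp_rw [(hasSum_finite_tripleProduct hx hx0 hz _).tsum_eq] at key
    have m (a : ℂ) : Multipliable fun k : ℕ ↦ 1 + a * x ^ (2 * k + 1) :=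
      multipliable_one_add_mul_pow hx a 1 1
    have := tendsto_nhds_unique key ((m z).mul (m z⁻¹)).hasProd.tendsto_prod_nat
    rw [tsum_mul_left, (m z).tprod_mul (m z⁻¹)] at this
    rw [← this]
    have h0 := eulerProd_ne_zero hy
    convert! hs.hasSum using 1
    field_simp
  · intro j
    refine Tendsto.mul (Tendsto.mul ?_ (Tendsto.mul (hlim j) ?_)) tendsto_const_nhds
    · exact (tendsto_prod_eulerProd hy).comp
        (tendsto_id.const_mul_atTop' (by norm_num : (0 : ℕ) < 2))
    · simpa [sub_eq_add_neg] using hlim (-j)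
  · refine .of_forall fun N j ↦ ?_
    rw [norm_mul, norm_mul, norm_mul]
    gcongr
    exacts [hC _, hD' _, hD' _]

/-- The product `∏ (1 + xⁿ)`. -/
noncomputable def eulerProdPlus (x : ℂ) : ℂ := ∏' n : ℕ, (1 + x ^ (n + 1))

/-- The product `∏ (1 - x²ⁿ⁻¹)`. -/
noncomputable def eulerProdOdd (x : ℂ) : ℂ := ∏' n : ℕ, (1 - x ^ (2 * n + 1))

lemma norm_pow_lt_one {x : ℂ} (hx : ‖x‖ < 1) {n : ℕ} (hn : n ≠ 0) : ‖x ^ n‖ < 1 := by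
  rw [norm_pow]; exact pow_lt_one₀ (norm_nonneg _) hx hn

lemma multipliable_one_add_pow {x : ℂ} (hx : ‖x‖ < 1) (m l : ℕ) :
    Multipliable fun k : ℕ ↦ 1 + x ^ ((m + 1) * k + l) := by
  simpa using multipliable_one_add_mul_pow hx 1 m l

lemma multipliable_one_sub_pow {x : ℂ} (hx : ‖x‖ < 1) (m l : ℕ) :
    Multipliable fun k : ℕ ↦ 1 - x ^ ((m + 1) * k + l) := by
  simpa [sub_eq_add_neg] using multipliable_one_add_mul_pow hx (-1) m l

lemma eulerProd_eq_odd_mul {x : ℂ} (hx : ‖x‖ < 1) :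
    eulerProd x = eulerProdOdd x * eulerProd (x ^ 2) := by
  have h := tprod_even_mul_odd (f := fun n : ℕ ↦ 1 - x ^ (n + 1))
    (multipliable_one_sub_pow hx 1 1) (by simpa [add_assoc] using multipliable_one_sub_pow hx 1 2)
  rw [eulerProd, ← h, eulerProdOdd, eulerProd]
  congr 2 with k
  ring

lemma eulerProdOdd_eq_div {x : ℂ} (hx : ‖x‖ < 1) :
    eulerProdOdd x = eulerProd x / eulerProd (x ^ 2) := by
  rw [eulerProd_eq_odd_mul hx, mul_div_cancel_right₀]
  exact eulerProd_ne_zero (norm_pow_lt_one hx two_ne_zero)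

lemma eulerProdPlus_eq_div {x : ℂ} (hx : ‖x‖ < 1) :
    eulerProdPlus x = eulerProd (x ^ 2) / eulerProd x := by
  rw [eq_div_iff (eulerProd_ne_zero hx), eulerProdPlus, eulerProd, eulerProd,
    ← Multipliable.tprod_mul (by simpa using multipliable_one_add_pow hx 0 1)
      (ModularForm.multipliable_one_sub_pow hx)]
  congr 1 with k
  ring

lemma tprod_eq_mul_mod_three {f : ℕ → ℂ} (h : Multipliable f)
    (h0 : Multipliable fun k ↦ f (3 * k)) (h1 : Multipliable fun k ↦ f (3 * k + 1))
    (h2 : Multipliable fun k ↦ f (3 * k + 2)) :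
    ∏' k, f k = (∏' k, f (3 * k)) * (∏' k, f (3 * k + 1)) * ∏' k, f (3 * k + 2) := by
  let e : Fin 3 × ℕ ≃ ℕ := (Equiv.prodComm _ _).trans (Nat.divModEquiv 3).symm
  have he (j : Fin 3) (k : ℕ) : e (j, k) = 3 * k + j := by
    simp [e, Nat.divModEquiv, mul_comm]
  have := HasProd.prod_fiberwise (e.hasProd_iff.mpr h.hasProd)
    (g := ![∏' k, f (3 * k), ∏' k, f (3 * k + 1), ∏' k, f (3 * k + 2)]) ?_
  · rw [← this.tprod_eq, tprod_fintype, Fin.prod_univ_three]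
    rfl
  · intro j
    simp only [Function.comp_apply, he]
    fin_cases j
    exacts [h0.hasProd, h1.hasProd, h2.hasProd]

lemma tsum_eq_add_mod_three {f : ℤ → ℂ} {s a b d : ℂ} (h : HasSum f s)
    (h0 : HasSum (fun k ↦ f (3 * k)) a) (h1 : HasSum (fun k ↦ f (3 * k + 1)) b)
    (h2 : HasSum (fun k ↦ f (3 * k - 1)) d) : s = a + b + d := by
  let e : Fin 3 × ℤ ≃ ℤ := (Equiv.prodComm _ _).trans (Int.divModEquiv 3).symm
  have he (j : Fin 3) (k : ℤ) : e (j, k) = 3 * k + j := by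
    simp [e, Int.divModEquiv, mul_comm]
  have := HasSum.prod_fiberwise (e.hasSum_iff.mpr h) (g := ![a, b, d]) ?_
  · rw [← this.tsum_eq, tsum_fintype, Fin.sum_univ_three]
    rfl
  · intro j
    simp only [Function.comp_apply, he]
    fin_cases j
    · simpa using h0
    · simpa using h1
    · have := (Equiv.addRight (1 : ℤ)).hasSum_iff.mpr h2
      refine this.congr_fun fun k ↦ ?_
      simp
      congr 1
      ring

lemma hasSum_phi {q : ℂ} (hq : ‖q‖ < 1) (hq0 : q ≠ 0) :
    HasSum (fun j : ℤ ↦ q ^ (j ^ 2) * (-1) ^ j) (eulerProd q ^ 2 / eulerProd (q ^ 2)) := by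
  have h := hasSum_tripleProduct hq hq0 (z := -1) (by simp)
  have h2 := eulerProd_ne_zero (norm_pow_lt_one hq two_ne_zero)
  convert! h using 1
  have : ∏' k : ℕ, (1 + -1 * q ^ (2 * k + 1)) = eulerProdOdd q := by
    simp [eulerProdOdd, sub_eq_add_neg]
  rw [inv_neg, inv_one, this, eulerProdOdd_eq_div hq]
  field_simp

lemma hasSum_psi {x : ℂ} (hx : ‖x‖ < 1) (hx0 : x ≠ 0) :
    HasSum (fun j : ℤ ↦ x ^ (j ^ 2) * x ^ j)
      (2 * eulerProd (x ^ 4) ^ 2 / eulerProd (x ^ 2)) := by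
  have h := hasSum_tripleProduct hx hx0 hx0
  have hq := norm_pow_lt_one hx two_ne_zero
  have h2 := eulerProd_ne_zero hq
  have e1 : ∏' k : ℕ, (1 + x * x ^ (2 * k + 1)) = eulerProdPlus (x ^ 2) := by
    rw [eulerProdPlus]
    congr 1 with k
    ring
  have e2 : ∏' k : ℕ, (1 + x⁻¹ * x ^ (2 * k + 1)) = 2 * eulerProdPlus (x ^ 2) := by
    have (k : ℕ) : 1 + x⁻¹ * x ^ (2 * k + 1) = 1 + (x ^ 2) ^ k := by
      rw [pow_succ', inv_mul_cancel_left₀ hx0, pow_mul]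
    simp_rw [this]
    rw [tprod_eq_zero_mul' (by simpa using multipliable_one_add_pow hq 0 1),
      eulerProdPlus]
    norm_num
  convert! h using 1
  rw [e1, e2, eulerProdPlus_eq_div hq, ← pow_mul]
  field_simp

/-- The product `∏ (1 - x⁶ⁿ⁻⁵)(1 - x⁶ⁿ⁻¹)` as a quotient of Euler products. -/
lemma tprod_one_sub_pow_six {x : ℂ} (hx : ‖x‖ < 1) :
    (∏' k : ℕ, (1 - x ^ (6 * k + 5))) * (∏' k : ℕ, (1 - x ^ (6 * k + 1))) =
      eulerProd x * eulerProd (x ^ 6) / (eulerProd (x ^ 2) * eulerProd (x ^ 3)) := by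
  have h3 := norm_pow_lt_one hx three_ne_zero
  have h := tprod_eq_mul_mod_three (f := fun n : ℕ ↦ 1 - x ^ (2 * n + 1))
    (multipliable_one_sub_pow hx 1 1)
    (by simpa [← mul_assoc] using multipliable_one_sub_pow hx 5 1)
    (by simpa [← mul_assoc, mul_add, add_assoc] using multipliable_one_sub_pow hx 5 3)
    (by simpa [← mul_assoc, mul_add, add_assoc] using multipliable_one_sub_pow hx 5 5)
  have e3 : ∏' k : ℕ, (1 - x ^ (2 * (3 * k + 1) + 1)) = eulerProdOdd (x ^ 3) := by
    rw [eulerProdOdd]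
    congr 1 with k
    ring
  have n1 := eulerProd_ne_zero hx
  have n2 := eulerProd_ne_zero (norm_pow_lt_one hx two_ne_zero)
  have n3 := eulerProd_ne_zero h3
  have n6 := eulerProd_ne_zero (norm_pow_lt_one hx (by simp : 6 ≠ 0))
  change eulerProdOdd x = _ at h
  rw [e3, eulerProdOdd_eq_div hx, eulerProdOdd_eq_div h3, ← pow_mul] at h
  simp only [show ∀ k, 2 * (3 * k) + 1 = 6 * k + 1 by intro k; ring,
    show ∀ k, 2 * (3 * k + 2) + 1 = 6 * k + 5 by intro k; ring] at h
  norm_num at h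
  rw [eq_div_iff (by positivity)]
  field_simp at h
  linear_combination -h

lemma tprod_one_add_pow_three {x : ℂ} (hx : ‖x‖ < 1) :
    (∏' k : ℕ, (1 + x ^ (3 * k + 2))) * (∏' k : ℕ, (1 + x ^ (3 * k + 1))) =
      eulerProd (x ^ 2) * eulerProd (x ^ 3) / (eulerProd x * eulerProd (x ^ 6)) := by
  have h3 := norm_pow_lt_one hx three_ne_zero
  have h := tprod_eq_mul_mod_three (f := fun n : ℕ ↦ 1 + x ^ (n + 1))
    (by simpa using multipliable_one_add_pow hx 0 1)
    (multipliable_one_add_pow hx 2 1)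
    (by simpa [add_assoc] using multipliable_one_add_pow hx 2 2)
    (by simpa [add_assoc] using multipliable_one_add_pow hx 2 3)
  have e3 : ∏' k : ℕ, (1 + x ^ (3 * k + 2 + 1)) = eulerProdPlus (x ^ 3) := by
    rw [eulerProdPlus]
    congr 1 with k
    ring
  have n1 := eulerProd_ne_zero hx
  have n2 := eulerProd_ne_zero (norm_pow_lt_one hx two_ne_zero)
  have n3 := eulerProd_ne_zero h3
  have n6 := eulerProd_ne_zero (norm_pow_lt_one hx (by simp : 6 ≠ 0))
  change eulerProdPlus x = _ at h
  rw [e3, eulerProdPlus_eq_div hx, eulerProdPlus_eq_div h3, ← pow_mul] at h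
  simp only [add_assoc] at h
  norm_num at h
  field_simp at h ⊢
  linear_combination -h

lemma phi_dissection {q : ℂ} (hq : ‖q‖ < 1) (hq0 : q ≠ 0) :
    eulerProd q ^ 2 / eulerProd (q ^ 2) = eulerProd (q ^ 9) ^ 2 / eulerProd (q ^ 18) -
      2 * q * (eulerProd (q ^ 3) * eulerProd (q ^ 18) ^ 2 /
        (eulerProd (q ^ 6) * eulerProd (q ^ 9))) := by
  have h3 := norm_pow_lt_one hq three_ne_zero
  have h9 := norm_pow_lt_one hq (by simp : 9 ≠ 0)
  have h90 := pow_ne_zero 9 hq0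
  have ha := hasSum_phi h9 h90
  have hz := neg_ne_zero.mpr (pow_ne_zero 6 hq0)
  have hb := (hasSum_tripleProduct h9 h90 hz).mul_left (-q)
  have hc := (hasSum_tripleProduct h9 h90 (inv_ne_zero hz)).mul_left (-q)
  have e1 : ∏' k : ℕ, (1 + -q ^ 6 * (q ^ 9) ^ (2 * k + 1)) =
      ∏' k : ℕ, (1 - (q ^ 3) ^ (6 * k + 5)) := by
    congr 1 with k
    ring
  have e2 : ∏' k : ℕ, (1 + (-q ^ 6)⁻¹ * (q ^ 9) ^ (2 * k + 1)) =
      ∏' k : ℕ, (1 - (q ^ 3) ^ (6 * k + 1)) := by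
    congr 1 with k
    field_simp
    ring
  rw [e1, e2, tprod_one_sub_pow_six h3] at hb
  rw [inv_inv, e1, e2, mul_comm (∏' _, _), tprod_one_sub_pow_six h3] at hc
  have m3 (m : ℤ) : (-1 : ℂ) ^ (3 * m) = (-1) ^ m := by
    rw [zpow_mul]; norm_num
  have hn (a : ℂ) : -a = (-1) * a := by ring
  have h := tsum_eq_add_mod_three (hasSum_phi hq hq0) (a := _) (b := _) (d := _)
    (ha.congr_fun fun m ↦ ?_) (hb.congr_fun fun m ↦ ?_) (hc.congr_fun fun m ↦ ?_)
  · rw [h]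
    simp only [← pow_mul]
    norm_num
    have n9 := eulerProd_ne_zero h9
    have n6 := eulerProd_ne_zero (norm_pow_lt_one hq (by simp : 6 ≠ 0))
    have n18 := eulerProd_ne_zero (norm_pow_lt_one hq (by simp : 18 ≠ 0))
    field_simp
    ring
  · rw [m3, ← zpow_natCast, ← zpow_mul]
    congr 2
    push_cast
    ring
  · rw [hn (q ^ 6), mul_zpow, zpow_add_one₀ (by simp), m3]
    rw [show q ^ (3 * m + 1) ^ 2 = q * ((q ^ 9) ^ m ^ 2 * (q ^ 6) ^ m) by
      simp only [← zpow_natCast q, ← zpow_mul, ← zpow_add₀ hq0, ← zpow_one_add₀ hq0]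
      congr 1; push_cast; ring]
    ring
  · rw [hn (q ^ 6), mul_inv, mul_zpow, zpow_sub_one₀ (by simp), m3]
    rw [show q ^ (3 * m - 1) ^ 2 = q * ((q ^ 9) ^ m ^ 2 * (q ^ 6)⁻¹ ^ m) by
      simp only [← zpow_natCast q, ← zpow_neg, ← zpow_mul, ← zpow_add₀ hq0, ← zpow_one_add₀ hq0]
      congr 1; push_cast; ring]
    norm_num
    ring

lemma psi_dissection {x : ℂ} (hx : ‖x‖ < 1) (hx0 : x ≠ 0) :
    eulerProd (x ^ 4) ^ 2 / eulerProd (x ^ 2) =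
      eulerProd (x ^ 12) * eulerProd (x ^ 18) ^ 2 / (eulerProd (x ^ 6) * eulerProd (x ^ 36)) +
        x ^ 2 * (eulerProd (x ^ 36) ^ 2 / eulerProd (x ^ 18)) := by
  have h6 := norm_pow_lt_one hx (by simp : 6 ≠ 0)
  have h9 := norm_pow_lt_one hx (by simp : 9 ≠ 0)
  have h90 := pow_ne_zero 9 hx0
  have hz := pow_ne_zero 3 hx0
  have ha := hasSum_tripleProduct h9 h90 hz
  have hb := (hasSum_psi h9 h90).mul_left (x ^ 2)
  have hc := hasSum_tripleProduct h9 h90 (inv_ne_zero hz)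
  have e1 : ∏' k : ℕ, (1 + x ^ 3 * (x ^ 9) ^ (2 * k + 1)) =
      ∏' k : ℕ, (1 + (x ^ 6) ^ (3 * k + 2)) := by
    congr 1 with k
    ring
  have e2 : ∏' k : ℕ, (1 + (x ^ 3)⁻¹ * (x ^ 9) ^ (2 * k + 1)) =
      ∏' k : ℕ, (1 + (x ^ 6) ^ (3 * k + 1)) := by
    congr 1 with k
    field_simp
    ring
  rw [e1, e2, tprod_one_add_pow_three h6] at ha
  rw [inv_inv, e1, e2, mul_comm (∏' _, _), tprod_one_add_pow_three h6] at hc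
  have h := tsum_eq_add_mod_three (hasSum_psi hx hx0)
    (ha.congr_fun fun m ↦ ?_) (hb.congr_fun fun m ↦ ?_) (hc.congr_fun fun m ↦ ?_)
  · simp only [← pow_mul] at h
    norm_num at h
    linear_combination h / 2
  · simp only [← zpow_natCast x, ← zpow_mul, ← zpow_add₀ hx0]
    congr 1; push_cast; ring
  · simp only [← zpow_natCast x, ← zpow_mul, ← zpow_add₀ hx0]
    congr 1; push_cast; ring
  · simp only [← zpow_natCast x, ← zpow_neg, ← zpow_mul, ← zpow_add₀ hx0]
    congr 1; push_cast; ring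

lemma norm_nome_lt_one {τ : ℂ} (hτ : 0 < τ.im) : ‖nome τ‖ < 1 :=
  UpperHalfPlane.norm_exp_two_pi_I_lt_one ⟨τ, hτ⟩

lemma nome_ne_zero (τ : ℂ) : nome τ ≠ 0 := exp_ne_zero _

lemma nome_natCast_mul (n : ℕ) (τ : ℂ) : nome (n * τ) = nome τ ^ n := by
  rw [nome, nome, ← exp_nat_mul]
  ring_nf

lemma c_eq_eulerProd {τ : ℂ} (hτ : 0 < τ.im) :
    c τ = exp (2 * Real.pi * I * τ / 3) *
      (eulerProd (nome τ) * eulerProd (nome τ ^ 6) ^ 3 /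
        (eulerProd (nome τ ^ 2) * eulerProd (nome τ ^ 3) ^ 3)) := by
  have hx := norm_nome_lt_one hτ
  rw [c]
  generalize nome τ = x at *
  have h3 := norm_pow_lt_one hx three_ne_zero
  have n2 := eulerProd_ne_zero (norm_pow_lt_one hx two_ne_zero)
  have n3 := eulerProd_ne_zero h3
  have n6 := eulerProd_ne_zero (norm_pow_lt_one hx (by simp : 6 ≠ 0))
  congr 1
  have hodd : Multipliable fun k : ℕ ↦ 1 - (x ^ 3) ^ (2 * k + 1) := multipliable_one_sub_pow h3 1 1
  have hO : ∏' k : ℕ, (1 - (x ^ 3) ^ (2 * k + 1)) = eulerProd (x ^ 3) / eulerProd (x ^ 6) := by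
    rw [← eulerProdOdd, eulerProdOdd_eq_div h3, ← pow_mul]
  have e (k : ℕ) : (1 - x ^ (6 * (k + 1) - 1)) * (1 - x ^ (6 * (k + 1) - 5)) /
      (1 - x ^ (6 * (k + 1) - 3)) ^ 2 =
      (1 - x ^ (6 * k + 5)) * (1 - x ^ (6 * k + 1)) / (1 - (x ^ 3) ^ (2 * k + 1)) ^ 2 := by
    rw [← pow_mul]
    congr; omega
  have h5 := multipliable_one_sub_pow hx 5 5
  have h1 := multipliable_one_sub_pow hx 5 1
  simp_rw [e]
  rw [Multipliable.tprod_div₀ (h5.mul h1) (hodd.pow 2), h5.tprod_mul h1, tprod_one_sub_pow_six hx,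
    hodd.tprod_pow 2, hO]
  · field_simp
  · rw [hodd.tprod_pow 2, hO]
    positivity

lemma eta_eq_eulerProd (τ : ℂ) :
    ModularForm.eta τ = exp (2 * Real.pi * I * τ / 24) * eulerProd (nome τ) := by
  simp [ModularForm.eta, ModularForm.eta_q, eulerProd, nome, Function.Periodic.qParam]

lemma c_eq_eta {τ : ℂ} (hτ : 0 < τ.im) :
    c τ = ModularForm.eta τ * ModularForm.eta (6 * τ) ^ 3 /
      (ModularForm.eta (2 * τ) * ModularForm.eta (3 * τ) ^ 3) := by
  have e (n : ℕ) : ModularForm.eta (n * τ) =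
      exp (2 * Real.pi * I * τ / 24) ^ n * eulerProd (nome τ ^ n) := by
    rw [eta_eq_eulerProd, nome_natCast_mul, ← exp_nat_mul]
    ring_nf
  have e1 := e 1
  have e2 := e 2
  have e3 := e 3
  have e6 := e 6
  norm_num at e1 e2 e3 e6
  rw [c_eq_eulerProd hτ, e1, e2, e3, e6,
    show 2 * Real.pi * I * τ / 3 = (8 : ℕ) * (2 * Real.pi * I * τ / 24) by push_cast; ring,
    exp_nat_mul]
  have := exp_ne_zero (2 * Real.pi * I * τ / 24)
  field_simp

lemma sqrt_ofReal_mul {r : ℝ} (hr : 0 < r) {z : ℂ} (hz : z ≠ 0) :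
    sqrt (r * z) = √r * sqrt z := by
  have hr0 : (r : ℂ) ≠ 0 := by exact_mod_cast hr.ne'
  rw [sqrt_eq_exp (mul_ne_zero hr0 hz), sqrt_eq_exp hz, log_ofReal_mul hr hz, add_div, exp_add,
    Real.sqrt_eq_rpow, Real.rpow_def_of_pos hr]
  push_cast
  ring_nf

lemma eta_neg_one_div {s : ℂ} (hs : 0 < s.im) {r : ℝ} (hr : 0 < r) :
    ModularForm.eta (-1 / (r * s)) = √r * ((sqrt I)⁻¹ * sqrt s) * ModularForm.eta (r * s) := by
  have hs0 : s ≠ 0 := by rintro rfl; simp at hs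
  have h := ModularForm.eta_comp_eq_csqrt_I_inv (x := r * s) (by simpa using mul_pos hr hs)
  simp only [Function.comp_apply, Pi.smul_apply, Pi.mul_apply, smul_eq_mul,
    sqrt_ofReal_mul hr hs0] at h
  rw [h]
  ring

lemma c_neg_one_div {s : ℂ} (hs : 0 < s.im) :
    c (-1 / (6 * s)) = eulerProd (nome s) ^ 3 * eulerProd (nome s ^ 6) /
      (2 * (eulerProd (nome s ^ 2) ^ 3 * eulerProd (nome s ^ 3))) := by
  have hs0 : s ≠ 0 := by rintro rfl; simp at hs
  have him : 0 < (-1 / (6 * s)).im := by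
    have : -1 / (6 * s) = ((1 / 6 : ℝ) : ℂ) * (-s)⁻¹ := by push_cast; field_simp
    rw [this, im_ofReal_mul]
    exact mul_pos (by norm_num) (UpperHalfPlane.im_inv_neg_coe_pos ⟨s, hs⟩)
  have h1 := eta_neg_one_div hs one_pos
  have h2 := eta_neg_one_div hs two_pos
  have h3 := eta_neg_one_div hs three_pos
  have h6 := eta_neg_one_div hs (by norm_num : (0 : ℝ) < 6)
  push_cast at h1 h2 h3 h6
  rw [c_eq_eta him, show 6 * (-1 / (6 * s)) = -1 / (1 * s) by field_simp,
    show 2 * (-1 / (6 * s)) = -1 / (3 * s) by field_simp; norm_num,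
    show 3 * (-1 / (6 * s)) = -1 / (2 * s) by field_simp; norm_num, h1, h2, h3, h6]
  have e (n : ℕ) : ModularForm.eta (n * s) =
      exp (2 * Real.pi * I * s / 24) ^ n * eulerProd (nome s ^ n) := by
    rw [eta_eq_eulerProd, nome_natCast_mul, ← exp_nat_mul]
    ring_nf
  have e1 := e 1
  have e2 := e 2
  have e3 := e 3
  have e6 := e 6
  push_cast at e1 e2 e3 e6
  rw [e1, e2, e3, e6]
  have hexp := exp_ne_zero (2 * Real.pi * I * s / 24)
  have hsI : sqrt I ≠ 0 := by rw [sqrt_eq_exp I_ne_zero]; exact exp_ne_zero _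
  have hss : sqrt s ≠ 0 := by rw [sqrt_eq_exp hs0]; exact exp_ne_zero _
  have n2 := eulerProd_ne_zero (norm_pow_lt_one (norm_nome_lt_one hs) two_ne_zero)
  have n3 := eulerProd_ne_zero (norm_pow_lt_one (norm_nome_lt_one hs) three_ne_zero)
  have r2 : ((√2 : ℝ) : ℂ) ^ 2 = 2 := by norm_cast; simp
  have r20 : ((√2 : ℝ) : ℂ) ≠ 0 := by norm_num
  have r30 : ((√3 : ℝ) : ℂ) ≠ 0 := by norm_num
  have r6 : ((√6 : ℝ) : ℂ) = (√2 : ℝ) * (√3 : ℝ) := by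
    norm_cast; rw [← Real.sqrt_mul (by norm_num)]; norm_num
  rw [r6, Real.sqrt_one, pow_one]
  push_cast
  generalize ((√2 : ℝ) : ℂ) = a at *
  generalize ((√3 : ℝ) : ℂ) = b at *
  field_simp
  linear_combination -(eulerProd (nome s ^ 6) * eulerProd (nome s) ^ 3) * r2

/-- For `τ` in the upper half-plane, `(1 + c(τ/2))·c(−1/τ) = 1/2 − c(τ/2)`. -/
theorem cubicCF_inversion (τ : ℂ) (hτ : 0 < τ.im) :
    (1 + c (τ / 2)) * c (-1 / τ) = 1 / 2 - c (τ / 2) := by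
  obtain ⟨s, rfl⟩ : ∃ s, τ = 12 * s := ⟨τ / 12, by ring⟩
  have hs : 0 < s.im := by simpa using hτ
  have h2s : 0 < (2 * s).im := by simpa using hs
  have h6s : 0 < (6 * s).im := by simpa using hs
  have hx := norm_nome_lt_one hs
  have hx0 := nome_ne_zero s
  have hphi := phi_dissection (norm_nome_lt_one h2s) (nome_ne_zero _)
  have hpsi := psi_dissection hx hx0
  have n2 := nome_natCast_mul 2 s
  have n6 := nome_natCast_mul 6 s
  have hc := c_eq_eulerProd h6s
  have he : exp (2 * Real.pi * I * (6 * s) / 3) = nome s ^ 2 := by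
    rw [← n2, nome]
    push_cast
    ring_nf
  push_cast at n2 n6
  rw [show 12 * s / 2 = 6 * s by ring, show 12 * s = 6 * (2 * s) by ring, c_neg_one_div h2s, hc, he]
  rw [n2] at hphi ⊢
  rw [n6]
  simp only [← pow_mul] at hphi ⊢
  norm_num at hphi ⊢
  generalize nome s = x at *
  have E (n : ℕ) (hn : n ≠ 0) := eulerProd_ne_zero (norm_pow_lt_one hx hn)
  have E2 := E 2 (by simp)
  have E4 := E 4 (by simp)
  have E6 := E 6 (by simp)
  have E12 := E 12 (by simp)
  have E18 := E 18 (by simp)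
  have E36 := E 36 (by simp)
  generalize eulerProd (x ^ 2) = p2 at *
  generalize eulerProd (x ^ 4) = p4 at *
  generalize eulerProd (x ^ 6) = p6 at *
  generalize eulerProd (x ^ 12) = p12 at *
  generalize eulerProd (x ^ 18) = p18 at *
  generalize eulerProd (x ^ 36) = p36 at *
  have hA : 1 - 2 * (x ^ 2 * (p6 * p36 ^ 3 / (p12 * p18 ^ 3))) =
      p2 ^ 2 / p4 * (p36 / p18 ^ 2) := by
    rw [hphi]
    field_simp
  have hB : 1 + x ^ 2 * (p6 * p36 ^ 3 / (p12 * p18 ^ 3)) =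
      p4 ^ 2 / p2 * (p6 * p36 / (p12 * p18 ^ 2)) := by
    rw [hpsi]
    field_simp
  rw [hB]
  trans (1 - 2 * (x ^ 2 * (p6 * p36 ^ 3 / (p12 * p18 ^ 3)))) / 2
  · rw [hA]
    field_simp
  · ring
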